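/- Let r ≥ 3 and n ≥ (r-1)(2r+1)/2, and let H be an n-vertex T_r-free r-graph with at least one edge and δ⁺_{r-1}(H) > 2n/(2r+1). Then there exist r pairwise disjoint independent sets V_1, …, V_r in the vertex set of H such that min{|V_1|, …, |V_r|} > 2n/(2r+1). -/

import Mathlib

variable {V : Type*} [Fintype V] [DecidableEq V]

/-- The (r-1)-shadow of an r-graph: all (r-1)-sets contained in some edge. -/
def sshadow (r : ℕ) (H : Finset (Finset V)) : Finset (Finset V) :=
  Finset.univ.filter (fun e => e.card = r - 1 ∧ ∃ E ∈ H, e ⊆ E)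

/-- The codegree neighborhood of a set `e`: vertices `v` with `e ∪ {v} ∈ H`. -/
def nbhd (H : Finset (Finset V)) (e : Finset V) : Finset V :=
  Finset.univ.filter (fun v => insert v e ∈ H)

/-- The neighborhood of a vertex. -/
def vnbhd (H : Finset (Finset V)) (v : V) : Finset V :=
  Finset.univ.filter (fun u => u ≠ v ∧ ∃ E ∈ H, u ∈ E ∧ v ∈ E)

/-- `H` is T_r-free. -/
def IsTrFree (r : ℕ) (H : Finset (Finset V)) : Prop :=
  ¬ ∃ (S W : Finset V) (a b : V),
      S.card = r - 1 ∧ W.card = r - 2 ∧ a ≠ b ∧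
      a ∉ S ∧ b ∉ S ∧ a ∉ W ∧ b ∉ W ∧ Disjoint S W ∧
      insert a S ∈ H ∧ insert b S ∈ H ∧ insert a (insert b W) ∈ H

/-- A set of vertices is independent. -/
def IsIndep (H : Finset (Finset V)) (I : Finset V) : Prop :=
  ∀ E ∈ H, (E ∩ I).card ≤ 1

/-- `H` is r-partite. -/
def IsRPartite (r : ℕ) (H : Finset (Finset V)) : Prop :=
  ∃ P : Fin r → Finset V, (∀ v : V, ∃! i, v ∈ P i) ∧ ∀ i, IsIndep H (P i)

/-- Minimum positive codegree. -/
noncomputable def minPosCodeg (r : ℕ) (H : Finset (Finset V)) : ℕ :=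
  sInf {k | ∃ e ∈ sshadow r H, (nbhd H e).card = k}

/-!
Let `S` be an `(r - 1)`-set, and suppose that an edge `F` contains two vertices `a`, `b` of the
neighborhood of `S`. If `F` misses `S`, then `S ∪ {a}`, `S ∪ {b}` and `F` form a copy of `T_r`.
Otherwise, since positive codegrees exceed `r - 1 = |S|`, each vertex of `F ∩ S` can be exchanged
for a vertex outside `S`, which leads to an edge that still contains `a` and `b` and misses `S`.
So neighborhoods of shadow sets are independent, and the `r` neighborhoods of the sets `E \ {u}`,
for `u` in a fixed edge `E`, are the desired sets: a common vertex `x` of the neighborhoods of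
`E \ {u}` and `E \ {v}` would give an edge `E \ {u} ∪ {x}` containing both `x` and `v`, which are
two vertices of the independent neighborhood of `E \ {v}`.
-/

section

open Finset

variable {r : ℕ} {H : Finset (Finset V)} {E F I S : Finset V} {a b u v : V}

theorem mem_nbhd : v ∈ nbhd H S ↔ insert v S ∈ H := by
  simp only [nbhd, mem_filter, mem_univ, true_and]

theorem mem_nbhd_erase_self (hE : E ∈ H) (hu : u ∈ E) : u ∈ nbhd H (E.erase u) := by
  rwa [mem_nbhd, insert_erase hu]

theorem notMem_of_mem_nbhd (hH : ∀ E ∈ H, #E = r) (hS : #S < r) (ha : a ∈ nbhd H S) :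
    a ∉ S := by
  intro haS
  rw [mem_nbhd, insert_eq_of_mem haS] at ha
  exact hS.ne (hH S ha)

theorem erase_mem_sshadow (hH : ∀ E ∈ H, #E = r) (hE : E ∈ H) (hu : u ∈ E) :
    E.erase u ∈ sshadow r H := by
  simp only [sshadow, mem_filter, mem_univ, true_and]
  exact ⟨by rw [card_erase_of_mem hu, hH E hE], E, hE, erase_subset u E⟩

omit [Fintype V] in
theorem IsIndep.eq_of_mem (hI : IsIndep H I) (hF : F ∈ H) (haF : a ∈ F) (hbF : b ∈ F)
    (haI : a ∈ I) (hbI : b ∈ I) : a = b :=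
  card_le_one.mp (hI F hF) a (mem_inter.mpr ⟨haF, haI⟩) b (mem_inter.mpr ⟨hbF, hbI⟩)

theorem IsTrFree.not_disjoint_of_mem_nbhd (hfree : IsTrFree r H) (hH : ∀ E ∈ H, #E = r)
    (hS : #S = r - 1) (hab : a ≠ b) (ha : a ∈ nbhd H S) (hb : b ∈ nbhd H S)
    (hF : F ∈ H) (haF : a ∈ F) (hbF : b ∈ F) : ¬ Disjoint S F := by
  intro hSF
  have hbF' : b ∈ F.erase a := mem_erase.mpr ⟨hab.symm, hbF⟩
  have hW : #((F.erase a).erase b) = r - 2 := by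
    rw [card_erase_of_mem hbF', card_erase_of_mem haF, hH F hF, Nat.sub_sub]
  have hWF : (F.erase a).erase b ⊆ F := (erase_subset _ _).trans (erase_subset _ _)
  refine hfree ⟨S, (F.erase a).erase b, a, b, hS, hW, hab, disjoint_right.mp hSF haF,
    disjoint_right.mp hSF hbF, by simp, by simp, hSF.mono_right hWF,
    mem_nbhd.mp ha, mem_nbhd.mp hb, ?_⟩
  rwa [insert_erase hbF', insert_erase haF]

theorem exists_edge_sdiff_subset_disjoint (hH : ∀ E ∈ H, #E = r)
    (hdeg : ∀ e ∈ sshadow r H, #S < #(nbhd H e)) (hF : F ∈ H) :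
    ∃ F' ∈ H, F \ S ⊆ F' ∧ Disjoint S F' := by
  induction hk : #(F ∩ S) generalizing F with
  | zero => exact ⟨F, hF, sdiff_subset, (disjoint_iff_inter_eq_empty.mpr (card_eq_zero.mp hk)).symm⟩
  | succ k ih =>
    obtain ⟨w, hw⟩ : (F ∩ S).Nonempty := card_pos.mp (by omega)
    obtain ⟨hwF, hwS⟩ := mem_inter.mp hw
    obtain ⟨v, hv, hvS⟩ :=
      exists_mem_notMem_of_card_lt_card (hdeg _ (erase_mem_sshadow hH hF hwF))
    have hcard : #(insert v (F.erase w) ∩ S) = k := by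
      rw [insert_inter_of_notMem hvS, erase_inter, card_erase_of_mem hw, hk, Nat.add_sub_cancel]
    obtain ⟨F', hF', hsub, hdisj⟩ := ih (mem_nbhd.mp hv) hcard
    refine ⟨F', hF', fun x hx => hsub ?_, hdisj⟩
    obtain ⟨hxF, hxS⟩ := mem_sdiff.mp hx
    have hxw : x ≠ w := (ne_of_mem_of_not_mem hwS hxS).symm
    exact mem_sdiff.mpr ⟨mem_insert_of_mem (mem_erase.mpr ⟨hxw, hxF⟩), hxS⟩

theorem IsTrFree.isIndep_nbhd (hfree : IsTrFree r H) (hH : ∀ E ∈ H, #E = r)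
    (hdeg : ∀ e ∈ sshadow r H, r ≤ #(nbhd H e)) (hS : #S = r - 1) :
    IsIndep H (nbhd H S) := by
  intro F hF
  by_contra! hcard
  obtain ⟨a, ha, b, hb, hab⟩ := one_lt_card.mp hcard
  obtain ⟨haF, haS⟩ := mem_inter.mp ha
  obtain ⟨hbF, hbS⟩ := mem_inter.mp hb
  have hSr : #S < r := by
    have := card_pos.mpr ⟨a, haF⟩
    have := hH F hF
    omega
  obtain ⟨F', hF', hsub, hdisj⟩ :=
    exists_edge_sdiff_subset_disjoint hH (fun e he => hSr.trans_le (hdeg e he)) hF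
  have haF' : a ∈ F' := hsub (mem_sdiff.mpr ⟨haF, notMem_of_mem_nbhd hH hSr haS⟩)
  have hbF' : b ∈ F' := hsub (mem_sdiff.mpr ⟨hbF, notMem_of_mem_nbhd hH hSr hbS⟩)
  exact hfree.not_disjoint_of_mem_nbhd hH hS hab haS hbS hF' haF' hbF' hdisj

theorem disjoint_nbhd_erase (hH : ∀ E ∈ H, #E = r) (hE : E ∈ H) (hu : u ∈ E) (hv : v ∈ E)
    (huv : u ≠ v) (hI : IsIndep H (nbhd H (E.erase v))) :
    Disjoint (nbhd H (E.erase u)) (nbhd H (E.erase v)) := by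
  refine disjoint_left.mpr fun x hxu hxv => ?_
  have hvu : v ∈ E.erase u := mem_erase.mpr ⟨huv.symm, hv⟩
  have hxv_eq : x = v := hI.eq_of_mem (mem_nbhd.mp hxu) (mem_insert_self _ _)
    (mem_insert_of_mem hvu) hxv (mem_nbhd_erase_self hE hv)
  have hcard : #(E.erase u) < r := hH E hE ▸ card_erase_lt_of_mem hu
  exact notMem_of_mem_nbhd hH hcard hxu (hxv_eq ▸ hvu)

theorem stmt6_general {t : ℝ} (ht : (r : ℝ) - 1 ≤ t) (hH : ∀ E ∈ H, #E = r)
    (hfree : IsTrFree r H) (hne : H.Nonempty)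
    (hdeg : ∀ e ∈ sshadow r H, t < (#(nbhd H e) : ℝ)) :
    ∃ P : Fin r → Finset V,
      (∀ i j, i ≠ j → Disjoint (P i) (P j)) ∧
      (∀ i, IsIndep H (P i)) ∧
      (∀ i, t < (#(P i) : ℝ)) := by
  have hdeg' : ∀ e ∈ sshadow r H, r ≤ #(nbhd H e) := by
    intro e he
    have hlt : (r : ℝ) < #(nbhd H e) + 1 := by linarith [hdeg e he]
    exact Nat.lt_succ_iff.mp (by exact_mod_cast hlt)
  obtain ⟨E, hE⟩ := hne
  have hindep : ∀ u ∈ E, IsIndep H (nbhd H (E.erase u)) := fun u hu =>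
    hfree.isIndep_nbhd hH hdeg' (by rw [card_erase_of_mem hu, hH E hE])
  let f : Fin r ≃ E := (E.equivFinOfCardEq (hH E hE)).symm
  refine ⟨fun i => nbhd H (E.erase (f i)), fun i j hij => ?_, fun i => hindep _ (f i).2,
    fun i => hdeg _ (erase_mem_sshadow hH hE (f i).2)⟩
  have hf : (f i : V) ≠ f j := fun h => hij (f.injective (Subtype.ext h))
  exact disjoint_nbhd_erase hH hE (f i).2 (f j).2 hf (hindep _ (f j).2)

end

/-- For `r ≥ 3` and `n ≥ (r-1)(2r+1)/2`, every `n`-vertex `T_r`-free `r`-graph with at least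
one edge and minimum positive codegree greater than `2n/(2r+1)` contains `r` pairwise
disjoint independent sets, each of size greater than `2n/(2r+1)`. -/
theorem stmt6 {V : Type*} [Fintype V] [DecidableEq V] {r n : ℕ} (hr : 3 ≤ r)
    (hn : ((r : ℝ) - 1) * (2 * r + 1) / 2 ≤ n) (hV : Fintype.card V = n)
    {H : Finset (Finset V)} (hH : ∀ E ∈ H, E.card = r)
    (hfree : IsTrFree r H) (hne : H.Nonempty)
    (hdeg : ∀ e ∈ sshadow r H, 2 * (n : ℝ) / (2 * r + 1) < ((nbhd H e).card : ℝ)) :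
    ∃ P : Fin r → Finset V,
      (∀ i j, i ≠ j → Disjoint (P i) (P j)) ∧
      (∀ i, IsIndep H (P i)) ∧
      (∀ i, 2 * (n : ℝ) / (2 * r + 1) < ((P i).card : ℝ)) :=
  stmt6_general (by rw [le_div_iff₀ (by positivity)]; linarith) hH hfree hne hdeg
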